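/- There is a constant A > 0 such that for every positive integer k and every real R ≥ 1, |Σ_{r ≤ R} (μ²(r)/φ(r)) · Σ_{d | r, gcd(d,k) = 1} d·μ(d)/φ(d) − 𝔖(k)| ≤ A·k·d(k)/(R·φ(k)). -/

import Mathlib

open Finset ArithmeticFunction

/-- The Generalized Riemann Hypothesis for Dirichlet L-functions: every zero of a
Dirichlet L-function in the critical strip lies on the critical line. -/
def GRH : Prop :=
  ∀ (N : ℕ) [NeZero N] (χ : DirichletCharacter ℂ N) (s : ℂ),
    DirichletCharacter.LFunction χ s = 0 → 0 < s.re → s.re < 1 → s.re = 1 / 2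

/-- `ψ(x; q, a) = ∑_{n ≤ x, n ≡ a (mod q)} Λ(n)`. -/
noncomputable def psi (x : ℝ) (q a : ℕ) : ℝ :=
  ∑ n ∈ (Finset.Icc 1 ⌊x⌋₊).filter (fun n : ℕ => (n : ZMod q) = (a : ZMod q)),
    ArithmeticFunction.vonMangoldt n

/-- `I(x,h,q,a) = ∫_x^{2x} (ψ(y+h;q,a) − ψ(y;q,a) − h/φ(q))² dy`. -/
noncomputable def momentI (x h : ℝ) (q a : ℕ) : ℝ :=
  ∫ y in x..(2 * x), (psi (y + h) q a - psi y q a - h / (q.totient : ℝ)) ^ 2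

/-- `λ_R(n) = ∑_{r ≤ R} (μ²(r)/φ(r)) ∑_{d ∣ (r,n)} d·μ(d)`. -/
noncomputable def lamR (R : ℝ) (n : ℕ) : ℝ :=
  ∑ r ∈ Finset.Icc 1 ⌊R⌋₊,
    ((ArithmeticFunction.moebius r : ℝ) ^ 2 / (r.totient : ℝ)) *
      ∑ d ∈ (Nat.gcd r n).divisors, (d : ℝ) * (ArithmeticFunction.moebius d : ℝ)

/-- `c = γ + ∑_p (log p)/(p(p−1))`. -/
noncomputable def cGY : ℝ :=
  Real.eulerMascheroniConstant +
    ∑' p : Nat.Primes, Real.log (p : ℕ) / (((p : ℕ) : ℝ) * (((p : ℕ) : ℝ) - 1))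

/-- `v(k) = ∑_{p ∣ k} (log p)/p`. -/
noncomputable def vGY (k : ℕ) : ℝ := ∑ p ∈ k.primeFactors, Real.log p / (p : ℝ)

/-- `w(k) = ∏_{p ∣ k} (1 + 1/√p)`. -/
noncomputable def wGY (k : ℕ) : ℝ := ∏ p ∈ k.primeFactors, (1 + 1 / Real.sqrt p)

/-- `g(k) = ∏_{p ∣ k} (1 + p/(p−1))`. -/
noncomputable def gGY (k : ℕ) : ℝ := ∏ p ∈ k.primeFactors, (1 + (p : ℝ) / ((p : ℝ) - 1))

/-- The twin prime constant `C = ∏_{p > 2} (1 − 1/(p−1)²)`. -/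
noncomputable def twinC : ℝ :=
  ∏' p : Nat.Primes, (if 2 < (p : ℕ) then 1 - 1 / (((p : ℕ) : ℝ) - 1) ^ 2 else 1)

/-- The singular series `𝔖(k)`. -/
noncomputable def singSeries (k : ℕ) : ℝ :=
  if 2 ∣ k ∧ k ≠ 0 then
    2 * twinC * ∏ p ∈ k.primeFactors.filter (fun p => 2 < p), ((p : ℝ) - 1) / ((p : ℝ) - 2)
  else 0

/-- `f(n,x,h)`, the length of the interval `[x,2x] ∩ [n−h,n)`. -/
noncomputable def flen (n : ℕ) (x h : ℝ) : ℝ :=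
  if x ≤ n ∧ (n : ℝ) < x + h then (n : ℝ) - x
  else if x + h ≤ n ∧ (n : ℝ) ≤ 2 * x then h
  else if 2 * x < n ∧ (n : ℝ) ≤ 2 * x + h then 2 * x - n + h
  else 0

/-!
The summand equals `± φ((r, k)) / φ(r)²` for squarefree `r` and vanishes otherwise, so it is
dominated by the Dirichlet convolution of `1_{a ∣ k} / φ(a)` with `1 / φ²` (take `a = (r, k)`).
Tail bounds `∑_{n > y} |g n| ≤ C / y` survive convolution with any `f` such that `∑ |f d| d < ∞`.
This is used twice: for the summand itself, and to pass from `1 / n²` to `1 / φ(n)²`, where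
Cauchy–Schwarz gives `(n / φ(n))² ≪ ∑_{d ∣ n} d^(-1/2)`. The complete series is an Euler product,
and comparing its factors with those of `𝔖(k)` evaluates it.
-/

open UniqueFactorizationMonoid (radical radical_dvd_self squarefree_radical)

/-- `f` has tails of order `C / y`: every finite sum of `|f n|` over integers `n > y` is at most
`C / y`. Finite sums are used so that no convergence has to be assumed. -/
def HasTailBound (f : ArithmeticFunction ℝ) (C : ℝ) : Prop :=
  ∀ y : ℝ, 0 < y → ∀ s : Finset ℕ, (∀ n ∈ s, y < n) → ∑ n ∈ s, |f n| ≤ C / y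

namespace HasTailBound

variable {f g : ArithmeticFunction ℝ} {C D y : ℝ}

lemma nonneg (hf : HasTailBound f C) : 0 ≤ C := by
  simpa using hf 1 one_pos ∅ (by simp)

lemma of_abs_le {c : ℝ} (hc : 0 ≤ c) (hfg : ∀ n, |f n| ≤ c * |g n|) (hg : HasTailBound g C) :
    HasTailBound f (c * C) := by
  intro y hy s hs
  calc ∑ n ∈ s, |f n| ≤ c * ∑ n ∈ s, |g n| := by
        rw [mul_sum]
        exact sum_le_sum fun n _ => hfg n
    _ ≤ c * (C / y) := by gcongr; exact hg y hy s hs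
    _ = c * C / y := (mul_div_assoc ..).symm

lemma sum_abs_div_le (hf : HasTailBound f C) (hy : 0 < y) {d : ℕ} (hd : 0 < d) {s : Finset ℕ}
    (hs : ∀ n ∈ s, y < n) : ∑ n ∈ s with d ∣ n, |f (n / d)| ≤ d * (C / y) := by
  have hd' : (0 : ℝ) < d := by exact_mod_cast hd
  have hinj : Set.InjOn (· / d) (s.filter (d ∣ ·) : Set ℕ) := fun m hm n hn hmn =>
    (Nat.div_left_inj (mem_filter.1 hm).2 (mem_filter.1 hn).2).1 hmn
  have hquot : ∀ m ∈ (s.filter (d ∣ ·)).image (· / d), y / d < m := by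
    simp only [mem_image, mem_filter]
    rintro _ ⟨n, ⟨hn, hdn⟩, rfl⟩
    rw [Nat.cast_div hdn hd'.ne']
    exact div_lt_div_of_pos_right (hs n hn) hd'
  calc ∑ n ∈ s with d ∣ n, |f (n / d)|
      = ∑ m ∈ (s.filter (d ∣ ·)).image (· / d), |f m| :=
        (sum_image (f := fun m => |f m|) hinj).symm
    _ ≤ C / (y / d) := hf _ (by positivity) _ hquot
    _ = d * (C / y) := by field_simp

lemma mul (hf : ∀ s : Finset ℕ, ∑ d ∈ s, |f d| * d ≤ D) (hg : HasTailBound g C) :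
    HasTailBound (f * g) (D * C) := by
  intro y hy s hs
  have hs0 : ∀ n ∈ s, n ≠ 0 := by
    rintro n hn rfl
    exact (hy.trans (hs 0 hn)).ne' Nat.cast_zero
  calc ∑ n ∈ s, |(f * g) n|
      ≤ ∑ n ∈ s, ∑ d ∈ n.divisors, |f d| * |g (n / d)| := by
        refine sum_le_sum fun n _ => ?_
        rw [mul_apply, Nat.sum_divisorsAntidiagonal fun d e => f d * g e]
        simpa only [abs_mul] using abs_sum_le_sum_abs (fun d => f d * g (n / d)) n.divisors
    _ = ∑ d ∈ s.biUnion Nat.divisors, ∑ n ∈ s with d ∣ n, |f d| * |g (n / d)| := by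
        refine sum_comm' fun n d => ?_
        simp only [mem_filter, mem_biUnion, Nat.mem_divisors]
        exact ⟨fun ⟨hn, hd⟩ => ⟨⟨hn, hd.1⟩, n, hn, hd⟩,
          fun ⟨⟨hn, hd⟩, _⟩ => ⟨hn, hd, hs0 n hn⟩⟩
    _ ≤ ∑ d ∈ s.biUnion Nat.divisors, |f d| * d * (C / y) := by
        refine sum_le_sum fun d hd => ?_
        obtain ⟨n, -, hdn⟩ := mem_biUnion.1 hd
        rw [← mul_sum, mul_assoc]
        gcongr
        exact hg.sum_abs_div_le hy (Nat.pos_of_mem_divisors hdn) hs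
    _ ≤ D * (C / y) := by
        rw [← sum_mul]
        have := hg.nonneg
        gcongr
        exact hf _
    _ = D * C / y := (mul_div_assoc ..).symm

lemma summable (hf : HasTailBound f C) : Summable fun n => |f n| := by
  refine summable_of_sum_le (c := C / (1 / 2)) (fun n => abs_nonneg (f n)) fun s => ?_
  rw [← sum_erase s (a := 0) (by simp)]
  refine hf _ one_half_pos _ fun n hn => ?_
  have : (1 : ℝ) ≤ n := by exact_mod_cast Nat.one_le_iff_ne_zero.2 (ne_of_mem_erase hn)
  linarith

lemma abs_sum_Icc_sub_tsum_le (hf : HasTailBound f C) {R : ℝ} (hR : 0 < R) :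
    |∑ n ∈ Icc 1 ⌊R⌋₊, f n - ∑' n, f n| ≤ C / R := by
  have hlim := (hf.summable.of_abs.hasSum.const_sub (∑ n ∈ Icc 1 ⌊R⌋₊, f n)).abs
  refine le_of_tendsto hlim ?_
  filter_upwards [Filter.eventually_ge_atTop (Icc 1 ⌊R⌋₊)] with T hT
  rw [abs_sub_comm, ← sum_sdiff hT, add_sub_cancel_right, ← sum_erase _ f.map_zero]
  refine (abs_sum_le_sum_abs _ _).trans (hf R hR _ fun n hn => ?_)
  simp only [mem_erase, mem_sdiff, mem_Icc, not_and, not_le] at hn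
  exact (Nat.floor_lt hR.le).1 (hn.2.2 (Nat.one_le_iff_ne_zero.2 hn.1))

end HasTailBound

/-- The arithmetic function `n ↦ n ^ (-s)`. The value at `0` is set separately, since
`0 ^ 0 = 1` for real powers. -/
noncomputable def rpowNeg (s : ℝ) : ArithmeticFunction ℝ :=
  ⟨fun n => if n = 0 then 0 else (n : ℝ) ^ (-s), if_pos rfl⟩

lemma rpowNeg_apply {n : ℕ} (hn : n ≠ 0) (s : ℝ) : rpowNeg s n = (n : ℝ) ^ (-s) := if_neg hn

lemma rpowNeg_nonneg (s : ℝ) (n : ℕ) : 0 ≤ rpowNeg s n := by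
  by_cases hn : n = 0
  · simp [hn]
  · rw [rpowNeg_apply hn]; positivity

lemma rpowNeg_add (s t : ℝ) (n : ℕ) : rpowNeg (s + t) n = rpowNeg s n * rpowNeg t n := by
  by_cases hn : n = 0
  · simp [hn]
  · rw [rpowNeg_apply hn, rpowNeg_apply hn, rpowNeg_apply hn, neg_add,
      Real.rpow_add (by positivity)]

lemma rpowNeg_one {n : ℕ} (hn : n ≠ 0) : rpowNeg 1 n = (n : ℝ)⁻¹ := by
  rw [rpowNeg_apply hn, Real.rpow_neg_one]

lemma rpowNeg_two {n : ℕ} (hn : n ≠ 0) : rpowNeg 2 n = ((n : ℝ) ^ 2)⁻¹ := by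
  rw [rpowNeg_apply hn, Real.rpow_neg n.cast_nonneg, Real.rpow_two]

lemma rpowNeg_mul (s : ℝ) (m n : ℕ) : rpowNeg s (m * n) = rpowNeg s m * rpowNeg s n := by
  by_cases hmn : m * n = 0
  · rcases mul_eq_zero.1 hmn with h | h <;> simp [h]
  · rw [rpowNeg_apply hmn, rpowNeg_apply (left_ne_zero_of_mul hmn),
      rpowNeg_apply (right_ne_zero_of_mul hmn), Nat.cast_mul,
      Real.mul_rpow m.cast_nonneg n.cast_nonneg]

lemma isMultiplicative_rpowNeg (s : ℝ) : (rpowNeg s).IsMultiplicative :=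
  ⟨by simp [rpowNeg_apply], fun {m n} _ => rpowNeg_mul s m n⟩

lemma rpowNeg_add_mul_rpowNeg_apply (s t : ℝ) (n : ℕ) :
    (rpowNeg (s + t) * rpowNeg t) n = (∑ d ∈ n.divisors, rpowNeg s d) * rpowNeg t n := by
  rw [mul_apply, ← Nat.sum_divisorsAntidiagonal fun d _ => rpowNeg s d, sum_mul]
  refine sum_congr rfl fun x hx => ?_
  rw [rpowNeg_add, mul_assoc, ← rpowNeg_mul, (Nat.mem_divisorsAntidiagonal.1 hx).1]

lemma summable_rpowNeg {s : ℝ} (hs : 1 < s) : Summable (rpowNeg s) := by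
  refine (Real.summable_nat_rpow.2 (neg_lt_neg hs)).congr fun n => ?_
  by_cases hn : n = 0
  · simp [hn, Real.zero_rpow (by linarith : -s ≠ 0)]
  · exact (rpowNeg_apply hn s).symm

lemma sum_rpowNeg_le_tsum {s : ℝ} (hs : 1 < s) (t : Finset ℕ) :
    ∑ n ∈ t, rpowNeg s n ≤ ∑' n, rpowNeg s n :=
  (summable_rpowNeg hs).sum_le_tsum t fun n _ => rpowNeg_nonneg s n

lemma tsum_rpowNeg_pos {s : ℝ} (hs : 1 < s) : 0 < ∑' n, rpowNeg s n :=
  (summable_rpowNeg hs).tsum_pos (rpowNeg_nonneg s) 1 (by simp [rpowNeg_apply])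

lemma hasTailBound_rpowNeg_two : HasTailBound (rpowNeg 2) 2 := by
  intro y hy s hs
  have hsub : s ⊆ Ioo ⌊y⌋₊ (s.sup id + 1) := fun n hn =>
    mem_Ioo.2 ⟨(Nat.floor_lt hy.le).2 (hs n hn), Nat.lt_succ_of_le (le_sup (f := id) hn)⟩
  calc ∑ n ∈ s, |rpowNeg 2 n| = ∑ n ∈ s, ((n : ℝ) ^ 2)⁻¹ := by
        refine sum_congr rfl fun n hn => ?_
        have hn0 : n ≠ 0 := by rintro rfl; exact (hy.trans (hs 0 hn)).ne' Nat.cast_zero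
        rw [abs_of_nonneg (rpowNeg_nonneg 2 n)]
        exact rpowNeg_two hn0
    _ ≤ ∑ n ∈ Ioo ⌊y⌋₊ (s.sup id + 1), ((n : ℝ) ^ 2)⁻¹ :=
        sum_le_sum_of_subset_of_nonneg hsub fun _ _ _ => by positivity
    _ ≤ 2 / (⌊y⌋₊ + 1) := sum_Ioo_inv_sq_le _ _
    _ ≤ 2 / y := by gcongr; exact (Nat.lt_floor_add_one y).le

lemma prod_Ioc_one_sub_inv_sq (n : ℕ) :
    ∏ m ∈ Ioc 1 (n + 1), (1 - ((m : ℝ) ^ 2)⁻¹) = (n + 2) / (2 * (n + 1)) := by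
  induction n with
  | zero => simp
  | succ n ih =>
    rw [prod_Ioc_succ_top (by omega), ih]
    push_cast
    field_simp
    ring

lemma half_le_prod_one_sub_inv_sq {s : Finset ℕ} (hs : ∀ m ∈ s, 1 < m) :
    1 / 2 ≤ ∏ m ∈ s, (1 - ((m : ℝ) ^ 2)⁻¹) := by
  have hsub : s ⊆ Ioc 1 (s.sup id + 1) := fun m hm =>
    mem_Ioc.2 ⟨hs m hm, (le_sup (f := id) hm).trans (Nat.le_succ _)⟩
  calc (1 / 2 : ℝ) ≤ ((s.sup id : ℕ) + 2) / (2 * ((s.sup id : ℕ) + 1)) := by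
        rw [div_le_div_iff₀ two_pos (by positivity)]
        linarith
    _ = ∏ m ∈ Ioc 1 (s.sup id + 1), (1 - ((m : ℝ) ^ 2)⁻¹) := (prod_Ioc_one_sub_inv_sq _).symm
    _ ≤ ∏ m ∈ s, (1 - ((m : ℝ) ^ 2)⁻¹) := by
        refine prod_le_prod_of_subset_of_le_one hsub (fun m hm => ?_) fun m _ _ => ?_
        · have : (1 : ℝ) ≤ m := by exact_mod_cast (mem_Ioc.1 hm).1.le
          exact sub_nonneg.2 (inv_le_one_of_one_le₀ (one_le_pow₀ this))
        · exact sub_le_self _ (by positivity)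

lemma totient_eq_mul_prod_one_sub_inv (n : ℕ) :
    (n.totient : ℝ) = n * ∏ p ∈ n.primeFactors, (1 - (p : ℝ)⁻¹) := by
  have h := congrArg (Rat.cast (K := ℝ)) (Nat.totient_eq_mul_prod_factors n)
  push_cast at h
  exact h

lemma totient_eq_prod_sub_one_of_squarefree {n : ℕ} (hn : Squarefree n) :
    (n.totient : ℝ) = ∏ p ∈ n.primeFactors, ((p : ℝ) - 1) := by
  rw [totient_eq_mul_prod_one_sub_inv]
  nth_rw 1 [← Nat.prod_primeFactors_of_squarefree hn]
  rw [Nat.cast_prod, ← prod_mul_distrib]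
  refine prod_congr rfl fun p hp => ?_
  have : (p : ℝ) ≠ 0 := by exact_mod_cast (Nat.prime_of_mem_primeFactors hp).ne_zero
  field_simp

lemma one_sub_inv_pos_of_mem_primeFactors {n p : ℕ} (hp : p ∈ n.primeFactors) :
    0 < 1 - (p : ℝ)⁻¹ :=
  sub_pos.2 (inv_lt_one_of_one_lt₀ (by exact_mod_cast (Nat.prime_of_mem_primeFactors hp).one_lt))

lemma div_totient_eq_inv_prod {n : ℕ} (hn : n ≠ 0) :
    (n : ℝ) / n.totient = (∏ p ∈ n.primeFactors, (1 - (p : ℝ)⁻¹))⁻¹ := by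
  rw [totient_eq_mul_prod_one_sub_inv, div_mul_cancel_left₀ (by exact_mod_cast hn)]

lemma div_totient_le_div_totient_of_dvd {a k : ℕ} (hak : a ∣ k) (hk : k ≠ 0) :
    (a : ℝ) / a.totient ≤ k / k.totient := by
  rw [div_totient_eq_inv_prod (ne_zero_of_dvd_ne_zero hk hak), div_totient_eq_inv_prod hk]
  refine inv_anti₀ (prod_pos fun p hp => one_sub_inv_pos_of_mem_primeFactors hp) ?_
  exact prod_le_prod_of_subset_of_le_one (Nat.primeFactors_mono hak hk)
    (fun p hp => (one_sub_inv_pos_of_mem_primeFactors hp).le)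
    fun p _ _ => sub_le_self _ (by positivity)

lemma prod_primeFactors_one_add_inv_le {n : ℕ} (hn : n ≠ 0) :
    ∏ p ∈ n.primeFactors, (1 + (p : ℝ)⁻¹) ≤ ∑ d ∈ n.divisors, rpowNeg 1 d := by
  calc ∏ p ∈ n.primeFactors, (1 + (p : ℝ)⁻¹)
      = ∏ p ∈ (radical n).primeFactors, (1 + rpowNeg 1 p) := by
        rw [Nat.primeFactors_radical]
        refine prod_congr rfl fun p hp => ?_
        rw [rpowNeg_one (Nat.prime_of_mem_primeFactors hp).ne_zero]
    _ = ∑ d ∈ (radical n).divisors, rpowNeg 1 d :=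
        (isMultiplicative_rpowNeg 1).prodPrimeFactors_one_add_of_squarefree squarefree_radical
    _ ≤ ∑ d ∈ n.divisors, rpowNeg 1 d :=
        sum_le_sum_of_subset_of_nonneg (Nat.divisors_subset_of_dvd hn radical_dvd_self)
          fun d _ _ => rpowNeg_nonneg 1 d

lemma div_totient_le_two_mul_sum_divisors (n : ℕ) :
    (n : ℝ) / n.totient ≤ 2 * ∑ d ∈ n.divisors, rpowNeg 1 d := by
  rcases eq_or_ne n 0 with rfl | hn
  · simp
  have h_half : 1 / 2 ≤ (∏ p ∈ n.primeFactors, (1 - (p : ℝ)⁻¹)) *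
      ∏ p ∈ n.primeFactors, (1 + (p : ℝ)⁻¹) := by
    rw [← prod_mul_distrib]
    refine (half_le_prod_one_sub_inv_sq fun p hp =>
      (Nat.prime_of_mem_primeFactors hp).one_lt).trans_eq (prod_congr rfl fun p _ => ?_)
    rw [← inv_pow]
    ring
  have h_pos : 0 < ∏ p ∈ n.primeFactors, (1 - (p : ℝ)⁻¹) :=
    prod_pos fun p hp => one_sub_inv_pos_of_mem_primeFactors hp
  calc (n : ℝ) / n.totient = (∏ p ∈ n.primeFactors, (1 - (p : ℝ)⁻¹))⁻¹ :=
        div_totient_eq_inv_prod hn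
    _ ≤ 2 * ∏ p ∈ n.primeFactors, (1 + (p : ℝ)⁻¹) := by
        rw [inv_le_iff_one_le_mul₀' h_pos]
        linarith
    _ ≤ 2 * ∑ d ∈ n.divisors, rpowNeg 1 d := by
        gcongr
        exact prod_primeFactors_one_add_inv_le hn

lemma sq_div_totient_le (n : ℕ) :
    ((n : ℝ) / n.totient) ^ 2 ≤
      4 * (∑' m, rpowNeg (3 / 2) m) * ∑ d ∈ n.divisors, rpowNeg (1 / 2) d := by
  -- Cauchy–Schwarz with the splitting `d⁻² = d ^ (-3/2) * d ^ (-1/2)`.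
  have h_cs : (∑ d ∈ n.divisors, rpowNeg 1 d) ^ 2 ≤
      (∑ d ∈ n.divisors, rpowNeg (3 / 2) d) * ∑ d ∈ n.divisors, rpowNeg (1 / 2) d := by
    refine sum_sq_le_sum_mul_sum_of_sq_le_mul _ (fun d _ => rpowNeg_nonneg _ d)
      (fun d _ => rpowNeg_nonneg _ d) fun d _ => ?_
    rw [sq, ← rpowNeg_add, ← rpowNeg_add]
    norm_num
  have h_half_nonneg : 0 ≤ ∑ d ∈ n.divisors, rpowNeg (1 / 2) d :=
    sum_nonneg fun d _ => rpowNeg_nonneg _ d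
  calc ((n : ℝ) / n.totient) ^ 2 ≤ (2 * ∑ d ∈ n.divisors, rpowNeg 1 d) ^ 2 := by
        gcongr
        exact div_totient_le_two_mul_sum_divisors n
    _ ≤ 4 * ((∑ d ∈ n.divisors, rpowNeg (3 / 2) d) * ∑ d ∈ n.divisors, rpowNeg (1 / 2) d) := by
        rw [mul_pow]
        linarith
    _ ≤ 4 * ((∑' m, rpowNeg (3 / 2) m) * ∑ d ∈ n.divisors, rpowNeg (1 / 2) d) := by
        gcongr
        exact sum_rpowNeg_le_tsum (by norm_num) _
    _ = _ := (mul_assoc ..).symm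

/-- The arithmetic function `n ↦ 1 / φ(n)`, with value `0` at `0`. -/
noncomputable def invTotient : ArithmeticFunction ℝ :=
  ⟨fun n => (n.totient : ℝ)⁻¹, by simp⟩

lemma invTotient_apply (n : ℕ) : invTotient n = (n.totient : ℝ)⁻¹ := rfl

lemma invTotient_nonneg (n : ℕ) : 0 ≤ invTotient n := inv_nonneg.2 (Nat.cast_nonneg _)

lemma invTotient_prime {p : ℕ} (hp : p.Prime) : invTotient p = ((p : ℝ) - 1)⁻¹ := by
  rw [invTotient_apply, Nat.totient_prime hp, Nat.cast_sub hp.one_lt.le, Nat.cast_one]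

lemma isMultiplicative_invTotient : invTotient.IsMultiplicative := by
  refine ⟨by simp [invTotient_apply], fun {m n} hmn => ?_⟩
  rw [invTotient_apply, Nat.totient_mul hmn, Nat.cast_mul, mul_inv]
  rfl

lemma invTotient_sq_le (n : ℕ) : invTotient n ^ 2 ≤
    4 * (∑' m, rpowNeg (3 / 2) m) * (rpowNeg (5 / 2) * rpowNeg 2) n := by
  rcases eq_or_ne n 0 with rfl | hn
  · simp
  have hn' : (n : ℝ) ≠ 0 := by exact_mod_cast hn
  calc invTotient n ^ 2 = ((n : ℝ) / n.totient) ^ 2 * rpowNeg 2 n := by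
        rw [rpowNeg_two hn, invTotient_apply]
        field_simp
    _ ≤ 4 * (∑' m, rpowNeg (3 / 2) m) * (∑ d ∈ n.divisors, rpowNeg (1 / 2) d) * rpowNeg 2 n :=
        mul_le_mul_of_nonneg_right (sq_div_totient_le n) (rpowNeg_nonneg 2 n)
    _ = 4 * (∑' m, rpowNeg (3 / 2) m) * (rpowNeg (5 / 2) * rpowNeg 2) n := by
        rw [mul_assoc, ← rpowNeg_add_mul_rpowNeg_apply]
        norm_num

lemma exists_hasTailBound_invTotient_sq : ∃ C > 0, HasTailBound (invTotient.ppow 2) C := by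
  set Z := ∑' m, rpowNeg (3 / 2) m
  have hZ : 0 < Z := tsum_rpowNeg_pos (by norm_num)
  have h_weight (s : Finset ℕ) : ∑ d ∈ s, |rpowNeg (5 / 2) d| * d ≤ Z := by
    refine (sum_congr rfl fun d _ => ?_).trans_le (sum_rpowNeg_le_tsum (by norm_num) s)
    rcases eq_or_ne d 0 with rfl | hd
    · simp
    rw [abs_of_nonneg (rpowNeg_nonneg _ d), show (5 / 2 : ℝ) = 3 / 2 + 1 by norm_num, rpowNeg_add,
      rpowNeg_one hd, inv_mul_cancel_right₀ (by exact_mod_cast hd)]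
  refine ⟨4 * Z * (Z * 2), by positivity,
    .of_abs_le (by positivity) (fun n => ?_) (.mul h_weight hasTailBound_rpowNeg_two)⟩
  rw [ppow_apply two_pos, abs_of_nonneg (sq_nonneg _)]
  exact (invTotient_sq_le n).trans (mul_le_mul_of_nonneg_left (le_abs_self _) (by positivity))

/-- The arithmetic function `d ↦ d μ(d) / φ(d)` restricted to the `d` coprime to `k`. -/
noncomputable def coprimeCoeff (k : ℕ) : ArithmeticFunction ℝ :=
  ⟨fun d => if Nat.gcd d k = 1 then (d : ℝ) * (moebius d : ℝ) / (d.totient : ℝ) else 0, by simp⟩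

lemma coprimeCoeff_apply (k d : ℕ) : coprimeCoeff k d =
    if Nat.gcd d k = 1 then (d : ℝ) * (moebius d : ℝ) / (d.totient : ℝ) else 0 := rfl

lemma coprimeCoeff_prime (k : ℕ) {p : ℕ} (hp : p.Prime) :
    coprimeCoeff k p = if p ∣ k then 0 else -(p / ((p : ℝ) - 1)) := by
  have hcop : Nat.gcd p k = 1 ↔ ¬ p ∣ k := hp.coprime_iff_not_dvd
  rw [coprimeCoeff_apply, if_congr hcop rfl rfl, ite_not, moebius_apply_prime hp,
    Nat.totient_prime hp, Nat.cast_sub hp.one_lt.le, Nat.cast_one]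
  push_cast
  ring_nf

lemma isMultiplicative_coprimeCoeff (k : ℕ) : (coprimeCoeff k).IsMultiplicative := by
  refine ⟨by simp [coprimeCoeff_apply], fun {m n} hmn => ?_⟩
  have hcop : Nat.gcd (m * n) k = 1 ↔ Nat.gcd m k = 1 ∧ Nat.gcd n k = 1 :=
    Nat.coprime_mul_iff_left
  rw [coprimeCoeff_apply, coprimeCoeff_apply, coprimeCoeff_apply, if_congr hcop rfl rfl,
    isMultiplicative_moebius.map_mul_of_coprime hmn, Nat.totient_mul hmn, ite_zero_mul_ite_zero]
  push_cast
  rw [div_mul_div_comm, mul_mul_mul_comm]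

/-- The summand `(μ²(r) / φ(r)) · ∑_{d ∣ r, (d, k) = 1} d μ(d) / φ(d)` of the theorem, as an
arithmetic function of `r`. -/
noncomputable def goldstonSummand (k : ℕ) : ArithmeticFunction ℝ :=
  (((moebius : ArithmeticFunction ℝ).ppow 2).pmul invTotient).pmul (coprimeCoeff k * zeta)

lemma goldstonSummand_apply (k r : ℕ) : goldstonSummand k r =
    ((moebius r : ℝ) ^ 2 / (r.totient : ℝ)) * ∑ d ∈ r.divisors.filter (fun d => Nat.gcd d k = 1),
      (d : ℝ) * (moebius d : ℝ) / (d.totient : ℝ) := by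
  rw [goldstonSummand, pmul_apply, pmul_apply, ppow_apply two_pos, coe_mul_zeta_apply, sum_filter]
  rfl

lemma isMultiplicative_goldstonSummand (k : ℕ) : (goldstonSummand k).IsMultiplicative :=
  (isMultiplicative_moebius.intCast.ppow.pmul isMultiplicative_invTotient).pmul
    ((isMultiplicative_coprimeCoeff k).mul isMultiplicative_zeta.natCast)

lemma goldstonSummand_of_not_squarefree (k : ℕ) {r : ℕ} (hr : ¬ Squarefree r) :
    goldstonSummand k r = 0 := by
  simp [goldstonSummand_apply, moebius_eq_zero_of_not_squarefree hr]

lemma goldstonSummand_prime (k : ℕ) {p : ℕ} (hp : p.Prime) : goldstonSummand k p =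
    if p ∣ k then ((p : ℝ) - 1)⁻¹ else -(((p : ℝ) - 1) ^ 2)⁻¹ := by
  have hp1 : (p : ℝ) - 1 ≠ 0 := sub_ne_zero.2 (by exact_mod_cast hp.one_lt.ne')
  rw [goldstonSummand, pmul_apply, pmul_apply, ppow_apply two_pos, coe_mul_zeta_apply,
    intCoe_apply, moebius_apply_prime hp, hp.sum_divisors, coprimeCoeff_prime k hp,
    (isMultiplicative_coprimeCoeff k).map_one, invTotient_prime hp]
  split_ifs
  · simp
  · push_cast
    field_simp
    ring

lemma abs_goldstonSummand_of_squarefree {k r : ℕ} (hk : k ≠ 0) (hr : Squarefree r) :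
    |goldstonSummand k r| = (Nat.gcd r k).totient * invTotient r ^ 2 := by
  have hgcd : ((Nat.gcd r k).totient : ℝ) =
      ∏ p ∈ r.primeFactors, if p ∣ k then (p : ℝ) - 1 else 1 := by
    rw [totient_eq_prod_sub_one_of_squarefree (hr.squarefree_of_dvd (Nat.gcd_dvd_left r k)),
      Nat.primeFactors_gcd hr.ne_zero hk, ← filter_mem_eq_inter, prod_filter]
    refine prod_congr rfl fun p hp => if_congr ?_ rfl rfl
    simp [hk, Nat.prime_of_mem_primeFactors hp]
  rw [← (isMultiplicative_goldstonSummand k).prod_primeFactors hr, abs_prod,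
    ← isMultiplicative_invTotient.prod_primeFactors hr, hgcd, ← prod_pow, ← prod_mul_distrib]
  refine prod_congr rfl fun p hp => ?_
  have hpp := Nat.prime_of_mem_primeFactors hp
  have hp1 : 0 < (p : ℝ) - 1 := sub_pos.2 (by exact_mod_cast hpp.one_lt)
  rw [goldstonSummand_prime k hpp, invTotient_prime hpp]
  split_ifs
  · rw [abs_of_pos (inv_pos.2 hp1)]
    field_simp
  · rw [abs_neg, abs_of_pos (by positivity), one_mul, inv_pow]

/-- The arithmetic function `a ↦ 1 / φ(a)` supported on the divisors of `k`. -/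
noncomputable def divisorInvTotient (k : ℕ) : ArithmeticFunction ℝ :=
  ⟨fun a => if a ∣ k then invTotient a else 0, by simp⟩

lemma divisorInvTotient_apply (k a : ℕ) :
    divisorInvTotient k a = if a ∣ k then invTotient a else 0 := rfl

lemma divisorInvTotient_nonneg (k a : ℕ) : 0 ≤ divisorInvTotient k a :=
  ite_nonneg (invTotient_nonneg a) le_rfl

lemma sum_abs_divisorInvTotient_mul_le {k : ℕ} (hk : k ≠ 0) (s : Finset ℕ) :
    ∑ a ∈ s, |divisorInvTotient k a| * a ≤ k.divisors.card * ((k : ℝ) / k.totient) := by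
  calc ∑ a ∈ s, |divisorInvTotient k a| * a
      = ∑ a ∈ s with a ∣ k, (a : ℝ) / a.totient := by
        rw [sum_filter]
        refine sum_congr rfl fun a _ => ?_
        rw [abs_of_nonneg (divisorInvTotient_nonneg k a), divisorInvTotient_apply, ite_zero_mul,
          invTotient_apply, inv_mul_eq_div]
    _ ≤ ∑ a ∈ k.divisors, (a : ℝ) / a.totient := by
        refine sum_le_sum_of_subset_of_nonneg (fun a ha => ?_) fun _ _ _ => by positivity
        exact Nat.mem_divisors.2 ⟨(mem_filter.1 ha).2, hk⟩
    _ ≤ k.divisors.card * ((k : ℝ) / k.totient) := by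
        rw [← nsmul_eq_mul]
        exact sum_le_card_nsmul _ _ _ fun a ha =>
          div_totient_le_div_totient_of_dvd (Nat.dvd_of_mem_divisors ha) hk

lemma abs_goldstonSummand_le {k : ℕ} (hk : k ≠ 0) (r : ℕ) :
    |goldstonSummand k r| ≤ (divisorInvTotient k * invTotient.ppow 2) r := by
  have hterm (x : ℕ × ℕ) : 0 ≤ divisorInvTotient k x.1 * invTotient.ppow 2 x.2 := by
    rw [ppow_apply two_pos]
    exact mul_nonneg (divisorInvTotient_nonneg k _) (sq_nonneg _)
  rw [mul_apply]
  by_cases hr : Squarefree r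
  swap
  · rw [goldstonSummand_of_not_squarefree k hr, abs_zero]
    exact sum_nonneg fun x _ => hterm x
  obtain ⟨b, hab⟩ := Nat.gcd_dvd_left r k
  set a := Nat.gcd r k
  have hcop : a.Coprime b := Nat.coprime_of_squarefree_mul (hab ▸ hr)
  have ha0 : (a.totient : ℝ) ≠ 0 := by
    exact_mod_cast (Nat.totient_pos.2 (Nat.gcd_pos_of_pos_right r (Nat.pos_of_ne_zero hk))).ne'
  calc |goldstonSummand k r| = a.totient * invTotient r ^ 2 :=
        abs_goldstonSummand_of_squarefree hk hr
    _ = divisorInvTotient k a * invTotient.ppow 2 b := by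
        rw [hab, isMultiplicative_invTotient.map_mul_of_coprime hcop, ppow_apply two_pos,
          divisorInvTotient_apply, if_pos (Nat.gcd_dvd_right r k), invTotient_apply a]
        field_simp
    _ ≤ ∑ x ∈ r.divisorsAntidiagonal, divisorInvTotient k x.1 * invTotient.ppow 2 x.2 :=
        single_le_sum (f := fun x : ℕ × ℕ => divisorInvTotient k x.1 * invTotient.ppow 2 x.2)
          (fun x _ => hterm x) (a := (a, b)) (Nat.mem_divisorsAntidiagonal.2 ⟨hab.symm, hr.ne_zero⟩)

lemma hasTailBound_goldstonSummand {k : ℕ} (hk : k ≠ 0) {C : ℝ}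
    (hC : HasTailBound (invTotient.ppow 2) C) :
    HasTailBound (goldstonSummand k) (k.divisors.card * ((k : ℝ) / k.totient) * C) := by
  have h := HasTailBound.of_abs_le (f := goldstonSummand k) zero_le_one
    (fun r => (abs_goldstonSummand_le hk r).trans ((le_abs_self _).trans_eq (one_mul _).symm))
    (.mul (sum_abs_divisorInvTotient_mul_le hk) hC)
  rwa [one_mul] at h

lemma hasProd_one_add_of_isMultiplicative {R : Type*} [NormedCommRing R] [CompleteSpace R]
    {f : ArithmeticFunction R} (hf : f.IsMultiplicative) (hsq : ∀ n, ¬ Squarefree n → f n = 0)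
    (hsum : Summable fun n => ‖f n‖) :
    HasProd (fun p : Nat.Primes => 1 + f p) (∑' n, f n) := by
  refine (hf.eulerProduct_hasProd hsum).congr_fun fun p => ?_
  have h_high : ∀ e ∉ range 2, f ((p : ℕ) ^ e) = 0 := fun e he => hsq _ fun h => by
    rw [mem_range, not_lt] at he
    exact (by omega : e ≠ 1) ((Nat.squarefree_pow_iff p.2.ne_one (by omega)).1 h).2
  rw [tsum_eq_sum h_high, sum_range_succ, sum_range_one, pow_zero, pow_one, hf.map_one]

lemma hasProd_primes_ite_dvd {M : Type*} [CommMonoid M] [TopologicalSpace M] {k : ℕ} (hk : k ≠ 0)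
    (e : ℕ → M) :
    HasProd (fun p : Nat.Primes => if (p : ℕ) ∣ k then e p else 1) (∏ p ∈ k.primeFactors, e p) := by
  have h_mem (n : ℕ) : n ∈ k.primeFactors ↔ n.Prime ∧ n ∣ k := by simp [hk]
  rw [Nat.Primes.hasProd_iff_hasProd_ite (f := fun n => if n ∣ k then e n else 1)]
  have h_ite : ∀ n ∈ k.primeFactors, (if n ∈ k.primeFactors then e n else 1) = e n :=
    fun n hn => if_pos hn
  rw [← prod_congr rfl h_ite]
  refine (hasProd_prod_of_ne_finset_one fun n hn => if_neg hn).congr_fun fun n => ?_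
  rw [← ite_and, if_congr (h_mem n) rfl rfl]

lemma hasProd_twinC : HasProd (fun p : Nat.Primes =>
    if 2 < (p : ℕ) then 1 - 1 / (((p : ℕ) : ℝ) - 1) ^ 2 else 1) twinC := by
  refine Multipliable.hasProd ?_
  obtain ⟨C, -, hC⟩ := exists_hasTailBound_invTotient_sq
  have hsum : Summable fun p : Nat.Primes => |invTotient.ppow 2 p| :=
    hC.summable.comp_injective Nat.Primes.coe_nat_injective
  refine (Real.multipliable_one_add_of_summable (f := fun p : Nat.Primes =>
    if 2 < (p : ℕ) then -invTotient.ppow 2 p else 0) (hsum.of_norm_bounded fun p => ?_)).congr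
    fun p => ?_
  · split_ifs
    · rw [norm_neg, Real.norm_eq_abs]
    · rw [norm_zero]
      exact abs_nonneg _
  · split_ifs
    · rw [ppow_apply two_pos, invTotient_prime p.2, inv_pow, one_div]
      exact (sub_eq_add_neg ..).symm
    · exact add_zero 1

lemma singSeries_eq_twinC_mul_prod {k : ℕ} (h2 : 2 ∣ k) (hk : k ≠ 0) : singSeries k =
    twinC * ∏ p ∈ k.primeFactors, if 2 < p then ((p : ℝ) - 1) / ((p : ℝ) - 2) else 2 := by
  have htwo : k.primeFactors.filter (¬ 2 < ·) = {2} := by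
    ext p
    simp only [mem_filter, Nat.mem_primeFactors, mem_singleton, not_lt]
    refine ⟨fun ⟨⟨hp, _⟩, hle⟩ => hle.antisymm hp.two_le, ?_⟩
    rintro rfl
    exact ⟨⟨Nat.prime_two, h2, hk⟩, le_rfl⟩
  rw [singSeries, if_pos ⟨h2, hk⟩, prod_ite, htwo, prod_singleton]
  ring

lemma hasProd_singSeries {k : ℕ} (hk : k ≠ 0) :
    HasProd (fun p : Nat.Primes => 1 + goldstonSummand k p) (singSeries k) := by
  by_cases h2 : 2 ∣ k
  · rw [singSeries_eq_twinC_mul_prod h2 hk]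
    refine (hasProd_twinC.mul (hasProd_primes_ite_dvd hk _)).congr_fun fun p => ?_
    rw [goldstonSummand_prime k p.2]
    rcases p.2.two_le.eq_or_lt with hp | hp
    · rw [← hp, if_pos h2, if_neg (lt_irrefl 2), if_pos h2, if_neg (lt_irrefl 2)]
      norm_num
    have hp3 : (3 : ℝ) ≤ (p : ℕ) := by exact_mod_cast hp
    have hp1 : ((p : ℕ) : ℝ) - 1 ≠ 0 := by linarith
    have hp2 : ((p : ℕ) : ℝ) - 2 ≠ 0 := by linarith
    rw [if_pos hp, if_pos hp]
    split_ifs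
    · field_simp
      ring
    · rw [mul_one, one_div]
      exact (sub_eq_add_neg ..).symm
  · rw [singSeries, if_neg fun h => h2 h.1]
    refine hasProd_zero_of_exists_eq_zero ⟨⟨2, Nat.prime_two⟩, ?_⟩
    norm_num [goldstonSummand_prime k Nat.prime_two, h2]

lemma tsum_goldstonSummand {k : ℕ} (hk : k ≠ 0) : ∑' r, goldstonSummand k r = singSeries k := by
  obtain ⟨C, -, hC⟩ := exists_hasTailBound_invTotient_sq
  have hprod := hasProd_one_add_of_isMultiplicative (isMultiplicative_goldstonSummand k)
    (fun _ => goldstonSummand_of_not_squarefree k) (hasTailBound_goldstonSummand hk hC).summable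
  exact hprod.unique (hasProd_singSeries hk)

theorem lemma6_goldston :
    ∃ A : ℝ, 0 < A ∧ ∀ (k : ℕ) (R : ℝ), 1 ≤ k → 1 ≤ R →
      |(∑ r ∈ Finset.Icc 1 ⌊R⌋₊,
          ((ArithmeticFunction.moebius r : ℝ) ^ 2 / (r.totient : ℝ)) *
            ∑ d ∈ r.divisors.filter (fun d => Nat.gcd d k = 1),
              (d : ℝ) * (ArithmeticFunction.moebius d : ℝ) / (d.totient : ℝ))
        - singSeries k|
      ≤ A * (k : ℝ) * (k.divisors.card : ℝ) / (R * (k.totient : ℝ)) := by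
  obtain ⟨C, hC, htail⟩ := exists_hasTailBound_invTotient_sq
  refine ⟨C, hC, fun k R hk hR => ?_⟩
  have hk0 : k ≠ 0 := Nat.one_le_iff_ne_zero.1 hk
  simp only [← goldstonSummand_apply]
  rw [← tsum_goldstonSummand hk0]
  calc |∑ r ∈ Icc 1 ⌊R⌋₊, goldstonSummand k r - ∑' r, goldstonSummand k r|
      ≤ k.divisors.card * ((k : ℝ) / k.totient) * C / R :=
        (hasTailBound_goldstonSummand hk0 htail).abs_sum_Icc_sub_tsum_le (by linarith)
    _ = C * k * k.divisors.card / (R * k.totient) := by ring
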